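/- For every natural number k ≥ 2, f(2^{2^k − 1}, 3) ≥ 2^k. -/

import Mathlib

/-!
Words over `{1, 2}` are counted through the matrices `∏ [[aᵢ, 1], [1, 0]]`, whose top-left entry is
the continuant.

The engine is a folding identity. If `d = ⟨2, w, 2⟩`, then both `⟨2, w', 2⟩` with
`w' = w, 2, 1, 1, 1, wᵒᵖ` and `w' = w, 1, 1, 1, 2, wᵒᵖ` are equal to `2 d ^ 2`
(`continuant_fold_left`, `continuant_fold_right`): writing `(x, y)` for the top row of the matrix
of `2, w`, one has `d = 2 x + y`, and the new continuant is the quadratic form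
`8 x² + 8 x y + 2 y²`. As `2 (2 ^ (2 ^ k - 1))² = 2 ^ (2 ^ (k + 1) - 1)`, starting from
`⟨2, 1, 2⟩ = 2 ^ 3` and folding in both ways yields `2 ^ (k - 2)` words `w`, all of the same length,
with `⟨2, w, 2⟩ = 2 ^ (2 ^ k - 1)` (`exists_cores`).

Finally, a `2` at either end of a word may be replaced by `1, 1` without changing the continuant
(`continuant_core_ends`), which multiplies the number of words by four.
-/

/-- The continuant of a finite sequence of positive integers. -/
def continuant : List ℕ → ℕ
  | [] => 1
  | [a] => a
  | a :: b :: t => a * continuant (b :: t) + continuant t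

/-- `f d N` is the number of finite sequences of positive integers, all entries `< N`,
whose continuant equals `d`. -/
noncomputable def f (d N : ℕ) : ℕ :=
  Set.ncard {l : List ℕ | (∀ x ∈ l, 0 < x ∧ x < N) ∧ continuant l = d}

/-- `lam` is the largest real root of the real function `p`. -/
def IsGreatestRoot (p : ℝ → ℝ) (lam : ℝ) : Prop :=
  p lam = 0 ∧ ∀ x : ℝ, p x = 0 → x ≤ lam

/-- The matrix `∏ [[aᵢ, 1], [1, 0]]` of a word. -/
def contMat : List ℕ → Matrix (Fin 2) (Fin 2) ℕ
  | [] => 1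
  | a :: t => !![a, 1; 1, 0] * contMat t

lemma contMat_append (l m : List ℕ) : contMat (l ++ m) = contMat l * contMat m := by
  induction l with
  | nil => simp [contMat]
  | cons a t ih => rw [List.cons_append, contMat, contMat, ih, Matrix.mul_assoc]

lemma contMat_reverse (l : List ℕ) : contMat l.reverse = (contMat l).transpose := by
  induction l with
  | nil => simp [contMat]
  | cons a t ih =>
    have h : (!![a, 1; 1, 0] : Matrix (Fin 2) (Fin 2) ℕ).transpose = !![a, 1; 1, 0] := by
      ext i j; fin_cases i <;> fin_cases j <;> rfl
    rw [List.reverse_cons, contMat_append, ih, contMat.eq_2 a t, Matrix.transpose_mul, h]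
    simp only [contMat, mul_one]

lemma contMat_zero_zero (l : List ℕ) : contMat l 0 0 = continuant l := by
  fun_induction continuant l with
  | case1 => simp [contMat]
  | case2 a => simp [contMat]
  | case3 a b t ih1 ih2 =>
    rw [← ih1, ← ih2]
    simp [contMat, Matrix.mul_apply, Matrix.vecMul, dotProduct, Fin.sum_univ_two]

/-- `⟨2, w, 2⟩` in terms of the top row `(x, y) = (2 p + r, 2 q + s)` of the matrix of `2, w`. -/
lemma continuant_core (w : List ℕ) :
    continuant ([2] ++ w ++ [2]) =
      2 * (2 * contMat w 0 0 + contMat w 1 0) + (2 * contMat w 0 1 + contMat w 1 1) := by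
  rw [← contMat_zero_zero, contMat_append, contMat_append]
  simp [contMat, Matrix.mul_apply, Matrix.vecMul, dotProduct, Fin.sum_univ_two]
  ring

lemma continuant_fold_left (w : List ℕ) :
    continuant ([2] ++ (w ++ [2, 1, 1, 1] ++ w.reverse) ++ [2]) =
      2 * continuant ([2] ++ w ++ [2]) ^ 2 := by
  rw [continuant_core w, ← contMat_zero_zero]
  simp only [contMat_append, contMat_reverse]
  simp [contMat, Matrix.mul_apply, Matrix.vecMul, dotProduct, Fin.sum_univ_two]
  ring

lemma continuant_fold_right (w : List ℕ) :
    continuant ([2] ++ (w ++ [1, 1, 1, 2] ++ w.reverse) ++ [2]) =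
      2 * continuant ([2] ++ w ++ [2]) ^ 2 := by
  rw [continuant_core w, ← contMat_zero_zero]
  simp only [contMat_append, contMat_reverse]
  simp [contMat, Matrix.mul_apply, Matrix.vecMul, dotProduct, Fin.sum_univ_two]
  ring

/-- The two words `2` and `1, 1`, interchangeable at the ends of a word. -/
def endWord (b : Bool) : List ℕ := if b then [2] else [1, 1]

lemma continuant_core_ends (w : List ℕ) (b c : Bool) :
    continuant (endWord b ++ w ++ endWord c) = continuant ([2] ++ w ++ [2]) := by
  rw [← contMat_zero_zero, ← contMat_zero_zero]
  simp only [contMat_append]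
  cases b <;> cases c <;>
    simp [endWord, contMat, Matrix.mul_apply, Matrix.vecMul, dotProduct, Fin.sum_univ_two]

/-- The common length of the words `w` is recorded since it makes the two foldings injective
with disjoint images. -/
lemma exists_cores (m : ℕ) : ∃ (S : Finset (List ℕ)) (n : ℕ), S.card = 2 ^ m ∧ ∀ w ∈ S,
    w.length = n ∧ (∀ x ∈ w, 0 < x ∧ x < 3) ∧
      continuant ([2] ++ w ++ [2]) = 2 ^ (2 ^ (m + 2) - 1) := by
  induction m with
  | zero => exact ⟨{[1]}, 1, by simp, by simp [continuant]⟩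
  | succ m ih =>
    obtain ⟨S, n, hcard, hS⟩ := ih
    let F : List ℕ × Bool → List ℕ := fun p =>
      p.1 ++ (if p.2 then [2, 1, 1, 1] else [1, 1, 1, 2]) ++ p.1.reverse
    have hinj : Set.InjOn F (S ×ˢ (Finset.univ : Finset Bool) : Finset (List ℕ × Bool)) := by
      rintro ⟨w, b⟩ hw ⟨v, c⟩ hv h
      simp only [Finset.coe_product, Set.mem_prod, Finset.mem_coe] at hw hv
      have hl : w.length = v.length := (hS w hw.1).1.trans (hS v hv.1).1.symm
      simp only [F, List.append_assoc] at h
      obtain ⟨rfl, h2⟩ := List.append_inj h hl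
      cases b <;> cases c <;> simp at h2 ⊢
    refine ⟨(S ×ˢ Finset.univ).image F, 2 * n + 4, ?_, ?_⟩
    · rw [Finset.card_image_of_injOn hinj, Finset.card_product, hcard]
      simp [pow_succ]
    · intro w' hw'
      obtain ⟨⟨w, b⟩, hw, rfl⟩ := Finset.mem_image.1 hw'
      obtain ⟨hlen, hent, hcont⟩ := hS w (Finset.mem_product.1 hw).1
      have hpow : 2 * (2 ^ (2 ^ (m + 2) - 1)) ^ 2 = 2 ^ (2 ^ (m + 1 + 2) - 1) := by
        have h1 : 1 ≤ 2 ^ (m + 2) := Nat.one_le_two_pow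
        rw [← pow_mul, ← pow_succ']
        congr 1
        rw [show m + 1 + 2 = (m + 2) + 1 by ring, pow_succ 2 (m + 2)]
        omega
      refine ⟨?_, ?_, ?_⟩
      · cases b <;> simp [F, hlen] <;> ring
      · intro x hx
        by_cases hxw : x ∈ w
        · exact hent x hxw
        · cases b <;> simp [F, hxw] at hx <;> omega
      · rw [← hpow, ← hcont]
        cases b
        · exact continuant_fold_right w
        · exact continuant_fold_left w

lemma length_le_continuant (l : List ℕ) (h : ∀ x ∈ l, 0 < x) :
    l.length ≤ continuant l ∧ 0 < continuant l := by
  fun_induction continuant l with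
  | case1 => simp
  | case2 a => simpa [Nat.one_le_iff_ne_zero, Nat.pos_iff_ne_zero] using h
  | case3 a b t ih1 ih2 =>
    have h1 := ih1 fun x hx => h x (by simp at hx ⊢; tauto)
    have h2 := ih2 fun x hx => h x (by simp [hx])
    have ha : 0 < a := h a (by simp)
    have := Nat.le_mul_of_pos_left (continuant (b :: t)) ha
    simp only [List.length_cons] at h1 ⊢
    omega

/-- Without finiteness `Set.ncard`, and hence `f`, would take its junk value `0`. -/
lemma finite_words (d N : ℕ) :
    {l : List ℕ | (∀ x ∈ l, 0 < x ∧ x < N) ∧ continuant l = d}.Finite := by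
  refine ((List.finite_length_le (Fin N) d).image (List.map Fin.val)).subset ?_
  rintro l ⟨hl, rfl⟩
  refine ⟨l.pmap (fun x hx => ⟨x, hx⟩) fun x hx => (hl x hx).2, ?_, ?_⟩
  · simpa using (length_le_continuant l fun x hx => (hl x hx).1).1
  · simp [List.map_pmap]

theorem theorem5 (k : ℕ) (hk : 2 ≤ k) :
    2 ^ k ≤ f (2 ^ (2 ^ k - 1)) 3 := by
  obtain ⟨m, rfl⟩ := Nat.exists_eq_add_of_le' hk
  obtain ⟨S, n, hcard, hS⟩ := exists_cores m
  let G : Bool × List ℕ × Bool → List ℕ := fun p => endWord p.1 ++ p.2.1 ++ endWord p.2.2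
  let T : Finset (Bool × List ℕ × Bool) := Finset.univ ×ˢ S ×ˢ Finset.univ
  have hinj : Set.InjOn G T := by
    rintro ⟨b, w, c⟩ hw ⟨b', v, c'⟩ hv h
    simp only [T, Finset.coe_product, Set.mem_prod, Finset.mem_coe] at hw hv
    have hl : w.length = v.length := (hS w hw.2.1).1.trans (hS v hv.2.1).1.symm
    simp only [G, List.append_assoc] at h
    -- The first letter determines the left end.
    have hb : b = b' := by cases b <;> cases b' <;> simp [endWord] at h ⊢
    subst hb
    obtain ⟨rfl, h2⟩ := List.append_inj (List.append_cancel_left h) hl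
    cases c <;> cases c' <;> simp [endWord] at h2 ⊢
  have hT : T.card = 2 ^ (m + 2) := by
    simp only [T, Finset.card_product, hcard, Finset.card_univ, Fintype.card_bool]
    ring
  refine hT.symm.le.trans ?_
  rw [← Finset.card_image_of_injOn hinj, ← Set.ncard_coe_finset]
  refine Set.ncard_le_ncard ?_ (finite_words _ _)
  intro l hl
  obtain ⟨⟨b, w, c⟩, hw, rfl⟩ := Finset.mem_image.1 (Finset.mem_coe.1 hl)
  simp only [T, Finset.mem_product] at hw
  obtain ⟨-, hent, hcont⟩ := hS w hw.2.1
  refine ⟨fun x hx => ?_, (continuant_core_ends w b c).trans hcont⟩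
  by_cases hxw : x ∈ w
  · exact hent x hxw
  · cases b <;> cases c <;> simp [G, endWord, hxw] at hx <;> omega
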